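/- Fix t0 < tf. Let 𝔄 : [t0,tf] → ℝ^{12×12} be continuous, let 𝔅_e, 𝔅_p ∈ ℝ^{12×3} be constant matrices, let 𝔔 : [t0,tf] → ℝ^{12×12} be continuous with symmetric values, let 𝔔_f ∈ ℝ^{12×12} be symmetric, and let R_e, R_p : [t0,tf] → ℝ^{3×3} be continuous with symmetric positive definite values. Suppose S : [t0,tf] → ℝ^{12×12} is a symmetric differentiable solution of −dS/dt = 𝔄(t)^T S + S 𝔄(t) + 𝔔(t) − S 𝔅_e R_e(t)^{-1} 𝔅_e^T S + S 𝔅_p R_p(t)^{-1} 𝔅_p^T S with S(tf) = 𝔔_f. Then for every x0 ∈ ℝ^12 and all continuous controls u_e, u_p : [t0,tf] → ℝ^3, letting x solve dx/dt = 𝔄(t)x + 𝔅_e u_e(t) + 𝔅_p u_p(t) with x(t0) = x0, the cost J(u_e,u_p) = ∫_{t0}^{tf} ( x^T 𝔔(t) x + u_e^T R_e(t) u_e − u_p^T R_p(t) u_p ) dt + x(tf)^T 𝔔_f x(tf) satisfies the completion-of-squares identity: J(u_e,u_p) = x0^T S(t0) x0 + ∫_{t0}^{tf} [ (u_e(t)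 + R_e(t)^{-1}𝔅_e^T S(t) x(t))^T R_e(t) (u_e(t) + R_e(t)^{-1}𝔅_e^T S(t) x(t)) − (u_p(t) − R_p(t)^{-1}𝔅_p^T S(t) x(t))^T R_p(t) (u_p(t) − R_p(t)^{-1}𝔅_p^T S(t) x(t)) ] dt. -/

import Mathlib

/-!
The proof differentiates the candidate value `V t = x t ⬝ᵥ S t *ᵥ x t` along the trajectory.
Substituting the dynamics and the Riccati equation and expanding each weighted square by
`square_expand` shows that `V'` is exactly the difference between the integrand of deviations and
the running cost (`riccati_pointwise`). Both integrands are continuous, because inversion is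
continuous on invertible matrices, so the fundamental theorem of calculus applied to `V` on
`[t0, tf]`, together with `S tf = Qf`, gives the identity.
-/

open Matrix Set

section

variable {n m : Type*} [Fintype n] [Fintype m] [DecidableEq m]

theorem posDef_symm_and_mul_inv {R : Matrix m m ℝ} (hR : R.PosDef) :
    Rᵀ = R ∧ R * R⁻¹ = 1 :=
  ⟨by simpa [Matrix.IsHermitian, Matrix.conjTranspose_eq_transpose_of_trivial] using hR.isHermitian,
    Matrix.mul_nonsing_inv _ ((Matrix.isUnit_iff_isUnit_det _).1 hR.isUnit)⟩

theorem dotProduct_mulVec_symm {M : Matrix n n ℝ} (h : Mᵀ = M) (v w : n → ℝ) :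
    v ⬝ᵥ M *ᵥ w = w ⬝ᵥ M *ᵥ v := by
  rw [Matrix.dotProduct_mulVec, ← Matrix.mulVec_transpose, h, dotProduct_comm]

theorem square_expand {R : Matrix m m ℝ} (hR : R.PosDef) (u w : m → ℝ) :
    (u + R⁻¹ *ᵥ w) ⬝ᵥ R *ᵥ (u + R⁻¹ *ᵥ w)
      = u ⬝ᵥ R *ᵥ u + 2 * (u ⬝ᵥ w) + w ⬝ᵥ R⁻¹ *ᵥ w := by
  obtain ⟨hs, hi⟩ := posDef_symm_and_mul_inv hR
  have h1 : R *ᵥ (R⁻¹ *ᵥ w) = w := by rw [Matrix.mulVec_mulVec, hi, Matrix.one_mulVec]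
  have h2 : (R⁻¹ *ᵥ w) ⬝ᵥ R *ᵥ u = u ⬝ᵥ w := by rw [dotProduct_mulVec_symm hs, h1]
  rw [Matrix.mulVec_add, h1, add_dotProduct, dotProduct_add, dotProduct_add, h2,
    dotProduct_comm (R⁻¹ *ᵥ w) w]
  ring

/-- The right-hand side is the product-rule derivative of `x ⬝ᵥ S *ᵥ x`, with the derivatives of
`x` and `S` replaced by the dynamics and by the Riccati equation. -/
theorem riccati_pointwise {A Q S : Matrix n n ℝ} {Be Bp : Matrix n m ℝ} {Re Rp : Matrix m m ℝ}
    (hRe : Re.PosDef) (hRp : Rp.PosDef) (hS : Sᵀ = S) (x : n → ℝ) (ue up : m → ℝ) :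
    ((ue + Re⁻¹ *ᵥ (Beᵀ *ᵥ (S *ᵥ x))) ⬝ᵥ Re *ᵥ (ue + Re⁻¹ *ᵥ (Beᵀ *ᵥ (S *ᵥ x)))
        - (up - Rp⁻¹ *ᵥ (Bpᵀ *ᵥ (S *ᵥ x))) ⬝ᵥ Rp *ᵥ (up - Rp⁻¹ *ᵥ (Bpᵀ *ᵥ (S *ᵥ x))))
      - (x ⬝ᵥ Q *ᵥ x + ue ⬝ᵥ Re *ᵥ ue - up ⬝ᵥ Rp *ᵥ up)
    = (A *ᵥ x + Be *ᵥ ue + Bp *ᵥ up) ⬝ᵥ S *ᵥ x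
      + x ⬝ᵥ ((-(Aᵀ * S + S * A + Q - S * Be * Re⁻¹ * Beᵀ * S + S * Bp * Rp⁻¹ * Bpᵀ * S)) *ᵥ x
        + S *ᵥ (A *ᵥ x + Be *ᵥ ue + Bp *ᵥ up)) := by
  -- The pursuer's deviation is the evader's form with `w` replaced by `-w`.
  have hneg : up - Rp⁻¹ *ᵥ (Bpᵀ *ᵥ (S *ᵥ x)) = up + Rp⁻¹ *ᵥ (-(Bpᵀ *ᵥ (S *ᵥ x))) := by
    rw [Matrix.mulVec_neg, sub_eq_add_neg]
  have hSl : ∀ v, x ⬝ᵥ S *ᵥ v = v ⬝ᵥ S *ᵥ x := dotProduct_mulVec_symm hS x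
  have hB : ∀ (B : Matrix n m ℝ) (u : m → ℝ) (y : n → ℝ), (B *ᵥ u) ⬝ᵥ y = u ⬝ᵥ Bᵀ *ᵥ y := by
    intro B u y
    rw [Matrix.dotProduct_mulVec, Matrix.vecMul_transpose]
  have hA : ∀ y, x ⬝ᵥ Aᵀ *ᵥ y = (A *ᵥ x) ⬝ᵥ y := by
    intro y
    rw [Matrix.dotProduct_mulVec, Matrix.vecMul_transpose]
  rw [hneg, square_expand hRe, square_expand hRp]
  simp only [Matrix.neg_mulVec, Matrix.add_mulVec, Matrix.sub_mulVec, ← Matrix.mulVec_mulVec,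
    add_dotProduct, dotProduct_add, dotProduct_sub, dotProduct_neg, neg_dotProduct,
    Matrix.mulVec_add, Matrix.mulVec_neg, hSl, hA, hB]
  rw [dotProduct_comm (Re⁻¹ *ᵥ _), dotProduct_comm (Rp⁻¹ *ᵥ _)]
  ring

theorem hasDerivWithinAt_quadraticForm {s : Set ℝ} {t : ℝ} {x : ℝ → n → ℝ} {x' : n → ℝ}
    {S : ℝ → Matrix n n ℝ} {S' : Matrix n n ℝ} (hx : HasDerivWithinAt x x' s t)
    (hS : ∀ i j, HasDerivWithinAt (fun r => S r i j) (S' i j) s t) :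
    HasDerivWithinAt (fun r => x r ⬝ᵥ S r *ᵥ x r)
      (x' ⬝ᵥ S t *ᵥ x t + x t ⬝ᵥ (S' *ᵥ x t + S t *ᵥ x')) s t := by
  have hx' := hasDerivWithinAt_pi.1 hx
  have h := HasDerivWithinAt.fun_sum (u := Finset.univ) fun i _ =>
    (hx' i).fun_mul (HasDerivWithinAt.fun_sum (u := Finset.univ) fun j _ =>
      (hS i j).fun_mul (hx' j))
  refine h.congr_deriv ?_
  simp only [dotProduct, Matrix.mulVec, Pi.add_apply, Finset.sum_add_distrib]

theorem continuous_inv_of_posDef {X : Type*} [TopologicalSpace X] {R : X → Matrix m m ℝ}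
    (hc : Continuous R) (hR : ∀ t, (R t).PosDef) : Continuous fun t => (R t)⁻¹ := by
  simp only [Matrix.inv_def, Ring.inverse_eq_inv']
  exact (hc.matrix_det.inv₀ fun t => (hR t).det_pos.ne').smul hc.matrix_adjugate

end

/-- Completion-of-squares identity for the linear-quadratic pursuit-evasion
game: along any trajectory of dx/dt = 𝔄(t)x + 𝔅_e u_e + 𝔅_p u_p, the game cost equals
x0ᵀS(t0)x0 plus the integral of the weighted square of the evader's deviation from the
feedback −R_e⁻¹𝔅_eᵀSx minus the weighted square of the pursuer's deviation from
R_p⁻¹𝔅_pᵀSx, where S solves the indefinite Riccati equation with S(tf) = 𝔔_f. -/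
theorem lq_completion_of_squares (t0 tf : ℝ) (ht : t0 < tf)
    (A : ℝ → Matrix (Fin 12) (Fin 12) ℝ)
    (hA : ∀ i j, ContinuousOn (fun t => A t i j) (Set.Icc t0 tf))
    (Be Bp : Matrix (Fin 12) (Fin 3) ℝ)
    (Q : ℝ → Matrix (Fin 12) (Fin 12) ℝ)
    (hQcont : ∀ i j, ContinuousOn (fun t => Q t i j) (Set.Icc t0 tf))
    (hQsymm : ∀ t ∈ Set.Icc t0 tf, (Q t).IsSymm)
    (Qf : Matrix (Fin 12) (Fin 12) ℝ) (hQf : Qf.IsSymm)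
    (Re Rp : ℝ → Matrix (Fin 3) (Fin 3) ℝ)
    (hRecont : ∀ i j, ContinuousOn (fun t => Re t i j) (Set.Icc t0 tf))
    (hRpcont : ∀ i j, ContinuousOn (fun t => Rp t i j) (Set.Icc t0 tf))
    (hRe : ∀ t ∈ Set.Icc t0 tf, (Re t).PosDef)
    (hRp : ∀ t ∈ Set.Icc t0 tf, (Rp t).PosDef)
    (S : ℝ → Matrix (Fin 12) (Fin 12) ℝ)
    (hSsymm : ∀ t ∈ Set.Icc t0 tf, (S t).IsSymm)
    (hSode : ∀ t ∈ Set.Icc t0 tf, ∀ i j,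
      HasDerivWithinAt (fun r => S r i j)
        (-((A t)ᵀ * S t + S t * A t + Q t
            - S t * Be * (Re t)⁻¹ * Beᵀ * S t
            + S t * Bp * (Rp t)⁻¹ * Bpᵀ * S t) i j) (Set.Icc t0 tf) t)
    (hStf : S tf = Qf)
    (x0 : Fin 12 → ℝ) (ue up : ℝ → Fin 3 → ℝ)
    (hue : ∀ i, ContinuousOn (fun t => ue t i) (Set.Icc t0 tf))
    (hup : ∀ i, ContinuousOn (fun t => up t i) (Set.Icc t0 tf))
    (x : ℝ → Fin 12 → ℝ) (hx0 : x t0 = x0)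
    (hx : ∀ t ∈ Set.Icc t0 tf,
      HasDerivWithinAt x ((A t) *ᵥ x t + Be *ᵥ ue t + Bp *ᵥ up t) (Set.Icc t0 tf) t) :
    (∫ t in t0..tf,
        (x t ⬝ᵥ (Q t) *ᵥ x t + ue t ⬝ᵥ (Re t) *ᵥ ue t - up t ⬝ᵥ (Rp t) *ᵥ up t))
      + x tf ⬝ᵥ Qf *ᵥ x tf
    = x0 ⬝ᵥ (S t0) *ᵥ x0
      + ∫ t in t0..tf,
          ((ue t + (Re t)⁻¹ *ᵥ (Beᵀ *ᵥ (S t *ᵥ x t)))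
              ⬝ᵥ (Re t) *ᵥ (ue t + (Re t)⁻¹ *ᵥ (Beᵀ *ᵥ (S t *ᵥ x t)))
            - (up t - (Rp t)⁻¹ *ᵥ (Bpᵀ *ᵥ (S t *ᵥ x t)))
              ⬝ᵥ (Rp t) *ᵥ (up t - (Rp t)⁻¹ *ᵥ (Bpᵀ *ᵥ (S t *ᵥ x t)))) := by
  -- Continuity is checked for the restrictions to the subtype `Icc t0 tf`.
  have restr : ∀ {k l : ℕ} (M : ℝ → Matrix (Fin k) (Fin l) ℝ),
      (∀ i j, ContinuousOn (fun t => M t i j) (Set.Icc t0 tf)) →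
      Continuous fun t : Set.Icc t0 tf => M t := fun M h =>
    continuous_matrix fun i j => (h i j).domRestrict
  have cQ := restr Q hQcont
  have cRe := restr Re hRecont
  have cRp := restr Rp hRpcont
  have cS := restr S fun i j t h => (hSode t h i j).continuousWithinAt
  have cRei := continuous_inv_of_posDef cRe fun t => hRe t t.2
  have cRpi := continuous_inv_of_posDef cRp fun t => hRp t t.2
  have cue : Continuous fun t : Set.Icc t0 tf => ue t := continuous_pi fun i => (hue i).domRestrict
  have cup : Continuous fun t : Set.Icc t0 tf => up t := continuous_pi fun i => (hup i).domRestrict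
  have cxOn : ContinuousOn x (Set.Icc t0 tf) := fun t h => (hx t h).continuousWithinAt
  have cx : Continuous fun t : Set.Icc t0 tf => x t := cxOn.domRestrict
  have cy := cS.matrix_mulVec cx
  have cde := cue.add (cRei.matrix_mulVec ((continuous_const (y := Beᵀ)).matrix_mulVec cy))
  have cdp := cup.sub (cRpi.matrix_mulVec ((continuous_const (y := Bpᵀ)).matrix_mulVec cy))
  have cF := ((cx.dotProduct (cQ.matrix_mulVec cx)).add
    (cue.dotProduct (cRe.matrix_mulVec cue))).sub (cup.dotProduct (cRp.matrix_mulVec cup))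
  have cG := (cde.dotProduct (cRe.matrix_mulVec cde)).sub
    (cdp.dotProduct (cRp.matrix_mulVec cdp))
  set F : ℝ → ℝ := fun t =>
    x t ⬝ᵥ (Q t) *ᵥ x t + ue t ⬝ᵥ (Re t) *ᵥ ue t - up t ⬝ᵥ (Rp t) *ᵥ up t with hF
  set G : ℝ → ℝ := fun t =>
    (ue t + (Re t)⁻¹ *ᵥ (Beᵀ *ᵥ (S t *ᵥ x t)))
        ⬝ᵥ (Re t) *ᵥ (ue t + (Re t)⁻¹ *ᵥ (Beᵀ *ᵥ (S t *ᵥ x t)))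
      - (up t - (Rp t)⁻¹ *ᵥ (Bpᵀ *ᵥ (S t *ᵥ x t)))
        ⬝ᵥ (Rp t) *ᵥ (up t - (Rp t)⁻¹ *ᵥ (Bpᵀ *ᵥ (S t *ᵥ x t))) with hG
  have iF : IntervalIntegrable F MeasureTheory.volume t0 tf :=
    (continuousOn_iff_continuous_domRestrict.2 cF).intervalIntegrable_of_Icc ht.le
  have iG : IntervalIntegrable G MeasureTheory.volume t0 tf :=
    (continuousOn_iff_continuous_domRestrict.2 cG).intervalIntegrable_of_Icc ht.le
  have hV : ∀ t ∈ Set.Icc t0 tf,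
      HasDerivWithinAt (fun r => x r ⬝ᵥ S r *ᵥ x r) (G t - F t) (Set.Icc t0 tf) t := by
    intro t h
    rw [hF, hG]
    exact (hasDerivWithinAt_quadraticForm (hx t h) (hSode t h)).congr_deriv
      (riccati_pointwise (hRe t h) (hRp t h) (hSsymm t h) (x t) (ue t) (up t)).symm
  have ftc := intervalIntegral.integral_eq_sub_of_hasDerivAt_of_le ht.le
    (fun t h => (hV t h).continuousWithinAt)
    (fun t h => (hV t (Set.Ioo_subset_Icc_self h)).hasDerivAt (Icc_mem_nhds h.1 h.2))
    (iG.sub iF)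
  rw [intervalIntegral.integral_sub iG iF, hStf, hx0] at ftc
  linarith
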